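/- Fix s ∈ {1,…,n} and let j₀ be the index of the block containing s. Let w′ be the block-reversal permutation of {1,…,n−1} associated to the block sizes (c_1, …, c_{j₀}−1, …, c_l) (the j₀-th block shrunk by one element, the block being omitted if c_{j₀} = 1). Let p := w^{-1}(s), and define red : {1,…,n}∖{s} → {1,…,n−1} by red(v) = v if v < s and red(v) = v−1 if v > s. Then for all r ∈ {1,…,n−1}: w′(r) = red(w(r)) if r < p, and w′(r) = red(w(r+1)) if r ≥ p. (That is, deleting the value s from the word form of the block-reversal permutation w and standardizing yields the block-reversal permutation of the shrunken block sizes: w_I − s = w_{I′}.) -/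

import Mathlib

open Finset

noncomputable section

/-- Sum of the first `j` block sizes (blocks are 1-indexed). -/
def blkSum (c : ℕ → ℕ) (j : ℕ) : ℕ := ∑ i ∈ Finset.Icc 1 j, c i

/-- Block index of `a ∈ {1,…,n}`: the least `j` with `a ≤ c 1 + ⋯ + c j`. -/
def blk (c : ℕ → ℕ) (a : ℕ) : ℕ := sInf {j | a ≤ blkSum c j}

/-- The block-reversal permutation associated to the block sizes `c`: on the block
`C_j = {b_j, …, b_{j+1}-1}` (where `b_j = blkSum c (j-1) + 1`) it sends
`i ↦ b_j + b_{j+1} - 1 - i`. -/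
def blockRev (c : ℕ → ℕ) (i : ℕ) : ℕ :=
  blkSum c (blk c i - 1) + blkSum c (blk c i) + 1 - i

theorem blkSum_succ (c : ℕ → ℕ) (j : ℕ) : blkSum c (j+1) = blkSum c j + c (j+1) := by
  unfold blkSum
  rw [Finset.sum_Icc_succ_top (by omega)]

theorem blkSum_mono (c : ℕ → ℕ) : Monotone (blkSum c) :=
  monotone_nat_of_le_succ (fun j => by rw [blkSum_succ]; omega)

theorem blk_eq (c : ℕ → ℕ) (a k : ℕ) (h1 : blkSum c k < a) (h2 : a ≤ blkSum c (k+1)) :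
    blk c a = k + 1 := by
  unfold blk
  apply le_antisymm
  · exact Nat.sInf_le h2
  · apply le_csInf ⟨k+1, h2⟩
    intro b hb
    by_contra hlt
    have := blkSum_mono c (show b ≤ k by omega)
    simp only [Set.mem_setOf_eq] at hb
    omega

theorem blockRev_eq (c : ℕ → ℕ) (a k : ℕ) (h1 : blkSum c k < a) (h2 : a ≤ blkSum c (k+1)) :
    blockRev c a = blkSum c k + blkSum c (k+1) + 1 - a := by
  unfold blockRev
  rw [blk_eq c a k h1 h2]
  simp

theorem exists_blk (c : ℕ → ℕ) (l a : ℕ) (h1 : 1 ≤ a) (h2 : a ≤ blkSum c l) :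
    ∃ k, blkSum c k < a ∧ a ≤ blkSum c (k+1) := by
  induction l with
  | zero => simp [blkSum] at h2; omega
  | succ l ih =>
    by_cases h : a ≤ blkSum c l
    · exact ih h
    · exact ⟨l, by omega, h2⟩

theorem blkSum_shrink (c c' : ℕ → ℕ) (k : ℕ) (hk : blkSum c k < blkSum c (k+1))
    (hc' : ∀ j, c' j = c j - if j = k + 1 then 1 else 0) (j : ℕ) :
    (j ≤ k → blkSum c' j = blkSum c j) ∧ (k < j → blkSum c' j + 1 = blkSum c j) := by
  rw [blkSum_succ] at hk
  induction j with
  | zero => simp [blkSum]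
  | succ j ih =>
    rw [blkSum_succ, blkSum_succ, hc']
    by_cases h : j = k
    · subst h
      simp at ih ⊢
      omega
    · simp [h]
      omega

/-- Lemma 3.7 (i): deleting the value `s` from the word form of the block-reversal
permutation `w = w_I` and standardizing yields the block-reversal permutation `w_{I'}` of
the block sizes with the block of `s` shrunk by one: `w_I - s = w_{I'}`. -/
theorem block_reversal_delete_entry
    (l : ℕ) (hl : 1 ≤ l) (c : ℕ → ℕ) (hc : ∀ i ∈ Finset.Icc 1 l, 0 < c i)
    (n : ℕ) (hn : n = blkSum c l)
    (s : ℕ) (hs1 : 1 ≤ s) (hsn : s ≤ n)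
    (c' : ℕ → ℕ) (hc' : ∀ j, c' j = c j - if j = blk c s then 1 else 0)
    (p : ℕ) (hp1 : 1 ≤ p) (hpn : p ≤ n) (hp : blockRev c p = s) :
    ∀ r, 1 ≤ r → r ≤ n - 1 →
      (r < p →
        blockRev c' r = if blockRev c r < s then blockRev c r else blockRev c r - 1) ∧
      (p ≤ r →
        blockRev c' r =
          if blockRev c (r + 1) < s then blockRev c (r + 1) else blockRev c (r + 1) - 1) := by
  intro r hr1 hrn
  subst hn
  obtain ⟨q, hq1, hq2⟩ := exists_blk c l p hp1 hpn
  have hpe := blockRev_eq c p q hq1 hq2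
  rw [hp] at hpe
  rw [blk_eq c s q (by omega) (by omega)] at hc'
  have hS := blkSum_shrink c c' q (by omega) hc'
  have hSq := (hS q).1 le_rfl
  have hSq1 := (hS (q+1)).2 (by omega)
  constructor
  · intro hrp
    obtain ⟨k, hk1, hk2⟩ := exists_blk c l r hr1 (by omega)
    have hw := blockRev_eq c r k hk1 hk2
    rcases lt_trichotomy k q with h | h | h
    · have a1 := (hS k).1 (by omega)
      have a2 := (hS (k+1)).1 (by omega)
      have := blkSum_mono c (show k + 1 ≤ q by omega)
      rw [blockRev_eq c' r k (by omega) (by omega), if_pos (by omega)]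
      omega
    · subst h
      rw [blockRev_eq c' r k (by omega) (by omega), if_neg (by omega)]
      omega
    · have := blkSum_mono c (show q + 1 ≤ k by omega)
      omega
  · intro hrp
    obtain ⟨k, hk1, hk2⟩ := exists_blk c l (r+1) (by omega) (by omega)
    have hw := blockRev_eq c (r+1) k hk1 hk2
    rcases lt_trichotomy k q with h | h | h
    · have := blkSum_mono c (show k + 1 ≤ q by omega)
      omega
    · subst h
      rw [blockRev_eq c' r k (by omega) (by omega), if_pos (by omega)]
      omega
    · have a1 := (hS k).2 (by omega)
      have a2 := (hS (k+1)).2 (by omega)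
      have := blkSum_mono c (show q + 1 ≤ k by omega)
      rw [blockRev_eq c' r k (by omega) (by omega), if_neg (by omega)]
      omega

end
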